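/- Let d ≥ 2, let b : [−1,1] → ℝ be continuously differentiable, let σ ∈ S^{d-1}, and let G : S^{d-1} → ℝ be smooth. Then the following integration-by-parts identity on the sphere holds: ∫_{S^{d-1}} G(σ') b'(σ'·σ) (σ' − (σ'·σ)σ) dσ' = ∫_{S^{d-1}} M_{σ',σ}(∇_{σ'} G(σ')) b(σ'·σ) dσ', where the left-hand side integrand is the spherical gradient in σ of the map σ ↦ b(σ'·σ), ∇_{σ'} G denotes the spherical gradient of G, and M_{σ',σ}(x) := (σ'·σ)x − (σ·x)σ'. -/

import Mathlib

open MeasureTheory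
open scoped RealInnerProductSpace

noncomputable section

/-- Euclidean space `ℝ^d`. -/
abbrev E (d : ℕ) : Type := EuclideanSpace ℝ (Fin d)

/-- The unit sphere `S^{d-1}` of `ℝ^d`. -/
abbrev Sph (d : ℕ) : Type := Metric.sphere (0 : E d) 1

/-- The surface measure on the unit sphere, realized as a Hausdorff measure. -/
def sphMeasure (d : ℕ) : Measure (Sph d) := μH[(d : ℝ) - 1]

open Classical in
/-- The 0-homogeneous extension of a function defined on the unit sphere. -/
def homogExt {d : ℕ} (F : Sph d → ℝ) (x : E d) : ℝ :=
  if hx : x = 0 then 0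
  else F ⟨‖x‖⁻¹ • x, by
    rw [mem_sphere_zero_iff_norm, norm_smul, norm_inv, norm_norm,
      inv_mul_cancel₀ (norm_ne_zero_iff.mpr hx)]⟩

/-- Smoothness of a function on the sphere, via its 0-homogeneous extension. -/
def SphSmooth {d : ℕ} (F : Sph d → ℝ) : Prop :=
  ContDiffOn ℝ (⊤ : ℕ∞) (homogExt F) {x : E d | x ≠ 0}

/-- Spherical gradient: the Euclidean gradient of the 0-homogeneous extension. -/
def sphGrad {d : ℕ} (F : Sph d → ℝ) (σ : Sph d) : E d :=
  gradient (homogExt F) (σ : E d)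

/-- Euclidean Laplacian of a function on `ℝ^d`. -/
def lapl {d : ℕ} (f : E d → ℝ) (x : E d) : ℝ :=
  ∑ i : Fin d,
    fderiv ℝ (fun y => fderiv ℝ f y (EuclideanSpace.single i 1)) x (EuclideanSpace.single i 1)

/-- Spherical Laplacian: the Euclidean Laplacian of the 0-homogeneous extension. -/
def sphLap {d : ℕ} (F : Sph d → ℝ) (σ : Sph d) : ℝ :=
  lapl (homogExt F) (σ : E d)

/-- The spherical linear Boltzmann operator `𝓑` with kernel `b`. -/
def sphB {d : ℕ} (b : ℝ → ℝ) (F : Sph d → ℝ) (σ : Sph d) : ℝ :=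
  ∫ (σ' : Sph d), (F σ' - F σ) * b ⟪(σ' : E d), (σ : E d)⟫ ∂(sphMeasure d)

/-- The intertwined iterated carré du champ `Γ²_{𝓑,Δ}(g,g)`. -/
def Gamma2BD {d : ℕ} (b : ℝ → ℝ) (g : Sph d → ℝ) (σ : Sph d) : ℝ :=
  (1 / 2) * sphB b (fun τ => ‖sphGrad g τ‖ ^ 2) σ
    - ⟪sphGrad g σ, sphGrad (fun τ => sphB b g τ) σ⟫

/-- The iterated carré du champ `Γ²_{Δ,Δ}(g,g)` of the spherical Laplacian. -/
def Gamma2DD {d : ℕ} (g : Sph d → ℝ) (σ : Sph d) : ℝ :=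
  (1 / 2) * sphLap (fun τ => ‖sphGrad g τ‖ ^ 2) σ
    - ⟪sphGrad g σ, sphGrad (fun τ => sphLap g τ) σ⟫

/-- A collision kernel: non-negative, measurable, satisfying the Lévy condition. -/
def LevyKernel (d : ℕ) (b : ℝ → ℝ) : Prop :=
  Measurable b ∧ (∀ c ∈ Set.Icc (-1 : ℝ) 1, 0 ≤ b c) ∧
    ∀ e : Sph d,
      Integrable
        (fun σ' : Sph d => (1 - ⟪(e : E d), (σ' : E d)⟫ ^ 2) * b ⟪(e : E d), (σ' : E d)⟫)
        (sphMeasure d)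

/-- The log-Sobolev inequality `LS(Λ, b)` on the sphere. -/
def LS (d : ℕ) (b : ℝ → ℝ) (Λ : ℝ) : Prop :=
  ∀ f : Sph d → ℝ, SphSmooth f → (∀ σ, 0 < f σ) → (∀ σ, f (-σ) = f σ) →
    Λ * ∫ (σ : Sph d), (∫ (σ' : Sph d),
          (f σ' - f σ) ^ 2 / (f σ' + f σ) * b ⟪(σ' : E d), (σ : E d)⟫ ∂(sphMeasure d))
        ∂(sphMeasure d)
      ≤ ∫ (σ : Sph d), Gamma2BD b (fun τ => Real.log (f τ)) σ * f σ ∂(sphMeasure d)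

/-- The map `M_{a,c}(x) = (a·c) x − (c·x) a`, sending the tangent space at `a` to the
tangent space at `c`. -/
def Mmap {d : ℕ} (a c x : E d) : E d := ⟪a, c⟫ • x - ⟪c, x⟫ • a

/-- The Lipschitz parametrization of a part of the sphere by a face of the cube. -/
def cubeFace {n : ℕ} (i : Fin (n + 1)) (s : ℝ) (y : Fin n → ℝ) : E (n + 1) :=
  WithLp.toLp 2 (i.insertNth s y)

lemma cubeFace_ne_zero {n : ℕ} (i : Fin (n + 1)) {s : ℝ} (hs : s ≠ 0) (y : Fin n → ℝ) :
    cubeFace i s y ≠ 0 := fun h => hs <| by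
  simpa [cubeFace] using congrArg (fun v : E (n + 1) => v i) h

lemma contDiff_cubeFace {n : ℕ} (i : Fin (n + 1)) (s : ℝ) :
    ContDiff ℝ 1 (cubeFace (n := n) i s) := by
  refine (contDiff_euclidean).2 fun j => ?_
  refine Fin.succAboveCases i ?_ (fun k => ?_) j
  · simpa [cubeFace] using contDiff_const
  · simpa [cubeFace] using contDiff_apply ℝ ℝ k

lemma exists_cubeFace_eq {n : ℕ} {x : E (n + 1)} (hx : ‖x‖ = 1) :
    ∃ i : Fin (n + 1), ∃ s ∈ ({1, -1} : Set ℝ), ∃ y ∈ Metric.closedBall (0 : Fin n → ℝ) 1,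
      ‖cubeFace i s y‖⁻¹ • cubeFace i s y = x := by
  obtain ⟨i, hi⟩ := Finite.exists_max fun j => |x j|
  have hpos : 0 < |x i| := by
    by_contra! h
    have : x = 0 := by
      ext j
      exact abs_nonpos_iff.1 ((hi j).trans h)
    simp [this] at hx
  have hface : cubeFace i (x i / |x i|) (fun k => x (i.succAbove k) / |x i|) = |x i|⁻¹ • x := by
    ext j
    refine Fin.succAboveCases i ?_ (fun k => ?_) j <;> simp [cubeFace, div_eq_inv_mul]
  refine ⟨i, x i / |x i|, ?_, fun k => x (i.succAbove k) / |x i|, ?_, ?_⟩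
  · rcases abs_cases (x i) with ⟨h, _⟩ | ⟨h, _⟩
    · left; rw [h] at hpos ⊢; exact div_self hpos.ne'
    · right; rw [h] at hpos ⊢; rw [Set.mem_singleton_iff, div_neg, div_self (by linarith)]
  · rw [mem_closedBall_zero_iff, pi_norm_le_iff_of_nonneg zero_le_one]
    intro k
    rw [Real.norm_eq_abs, abs_div, abs_abs]
    exact div_le_one_of_le₀ (hi _) hpos.le
  · rw [hface, norm_smul, hx, norm_inv, Real.norm_eq_abs, abs_abs, mul_one, inv_inv, smul_smul,
      mul_inv_cancel₀ hpos.ne', one_smul]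

lemma hausdorffMeasure_sphere_lt_top (n : ℕ) :
    μH[(n : ℝ)] (Metric.sphere (0 : E (n + 1)) 1) < ⊤ := by
  set param : Fin (n + 1) → ℝ → (Fin n → ℝ) → E (n + 1) :=
    fun i s y => ‖cubeFace i s y‖⁻¹ • cubeFace i s y with hparam
  have hcover : Metric.sphere (0 : E (n + 1)) 1 ⊆
      ⋃ i, ⋃ s ∈ ({1, -1} : Set ℝ), param i s '' Metric.closedBall 0 1 := by
    intro x hx
    obtain ⟨i, s, hs, y, hy, h⟩ := exists_cubeFace_eq (mem_sphere_zero_iff_norm.1 hx)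
    simp only [Set.mem_iUnion]
    exact ⟨i, s, hs, y, hy, h⟩
  refine (measure_mono hcover).trans_lt ?_
  have himage : ∀ i, ∀ s ≠ 0, μH[(n : ℝ)] (param i s '' Metric.closedBall 0 1) < ⊤ := by
    intro i s hs
    have hsmooth : ContDiff ℝ 1 (param i s) :=
      ((((contDiff_cubeFace i s).norm ℝ (cubeFace_ne_zero i hs)).inv
        fun y => norm_ne_zero_iff.2 (cubeFace_ne_zero i hs y))).smul (contDiff_cubeFace i s)
    obtain ⟨K, hK⟩ := hsmooth.contDiffOn.exists_lipschitzOnWith one_ne_zero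
      (convex_closedBall (0 : Fin n → ℝ) 1) (isCompact_closedBall 0 1)
    refine (hK.hausdorffMeasure_image_le n.cast_nonneg).trans_lt ?_
    have hvol : (μH[(n : ℝ)] : Measure (Fin n → ℝ)) = volume := by
      simpa using hausdorffMeasure_pi_real (ι := Fin n)
    rw [hvol]
    exact ENNReal.mul_lt_top (ENNReal.rpow_lt_top_of_nonneg n.cast_nonneg ENNReal.coe_ne_top)
      (isCompact_closedBall 0 1).measure_lt_top
  refine (measure_iUnion_fintype_le _ _).trans_lt (ENNReal.sum_lt_top.2 fun i _ => ?_)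
  rw [Set.biUnion_pair]
  exact (measure_union_le _ _).trans_lt
    (ENNReal.add_lt_top.2 ⟨himage i 1 one_ne_zero, himage i (-1) (by norm_num)⟩)

lemma isFiniteMeasure_sphMeasure {d : ℕ} (hd : 2 ≤ d) : IsFiniteMeasure (sphMeasure d) := by
  obtain ⟨n, rfl⟩ : ∃ n, d = n + 1 := ⟨d - 1, by omega⟩
  refine ⟨?_⟩
  have hdim : ((n + 1 : ℕ) : ℝ) - 1 = n := by push_cast; ring
  rw [sphMeasure, hdim, ← isometry_subtype_coe.hausdorffMeasure_image (.inl n.cast_nonneg),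
    Set.image_univ, Subtype.range_coe]
  exact hausdorffMeasure_sphere_lt_top n

/-- A linear isometry restricts to an isometry of the unit sphere. -/
def sphIsometry {d : ℕ} (e : E d ≃ₗᵢ[ℝ] E d) : Sph d ≃ᵢ Sph d where
  toFun x := ⟨e x, by simp⟩
  invFun x := ⟨e.symm x, by simp⟩
  left_inv x := by simp
  right_inv x := by simp
  isometry_toFun := Isometry.of_dist_eq fun x y => e.dist_map x y

lemma continuous_sph_comp {d : ℕ} {X : Type*} [TopologicalSpace X] {f : E d → X}
    (hf : ContinuousOn f {x | x ≠ 0}) : Continuous fun x : Sph d => f x :=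
  hf.comp_continuous continuous_subtype_val fun x => ne_zero_of_mem_unit_sphere x

lemma isOpen_setOf_ne_zero (d : ℕ) : IsOpen {x : E d | x ≠ 0} := isOpen_ne

/-- The derivative of a function along an infinitesimal rotation has zero mean on the sphere. -/
lemma integral_fderiv_skewAdjoint_eq_zero {d : ℕ} (hd : 2 ≤ d) {f : E d → ℝ}
    (hf : ContDiffOn ℝ 1 f {x | x ≠ 0}) {A : E d →L[ℝ] E d} (hA : A ∈ skewAdjoint (E d →L[ℝ] E d)) :
    ∫ x : Sph d, fderiv ℝ f x (A x) ∂(sphMeasure d) = 0 := by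
  have := isFiniteMeasure_sphMeasure hd
  have hU (t : ℝ) : NormedSpace.exp (t • A) ∈ unitary (E d →L[ℝ] E d) :=
    let := NormedAlgebra.restrictScalars ℚ ℝ (E d →L[ℝ] E d)
    NormedSpace.exp_mem_unitary_of_mem_skewAdjoint (skewAdjoint.smul_mem t hA)
  let R (t : ℝ) : Sph d ≃ᵢ Sph d := sphIsometry (Unitary.linearIsometryEquiv ⟨_, hU t⟩)
  have hR (t : ℝ) (x : Sph d) : (R t x : E d) = NormedSpace.exp (t • A) (x : E d) := rfl
  have hR0 (x : Sph d) : R 0 x = x := by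
    ext1
    have hzero : (0 : ℝ) • A = 0 := zero_smul ℝ A
    rw [hR, hzero, NormedSpace.exp_zero, one_apply_eq_self]
  have hdf : Continuous fun x : Sph d => fderiv ℝ f x (A x) :=
    (continuous_sph_comp (hf.continuousOn_fderiv_of_isOpen (isOpen_setOf_ne_zero d) le_rfl)).clm_apply
      (A.continuous.comp continuous_subtype_val)
  obtain ⟨C, hC⟩ := isCompact_univ.exists_bound_of_continuousOn hdf.continuousOn
  have hfc : Continuous fun x : Sph d => f x := continuous_sph_comp hf.continuousOn
  have hderiv (x : Sph d) (t : ℝ) :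
      HasDerivAt (fun t => f (R t x)) (fderiv ℝ f (R t x) (A (R t x))) t := by
    have hfd : HasFDerivAt f (fderiv ℝ f (R t x)) (R t x) :=
      ((hf.contDiffAt ((isOpen_setOf_ne_zero d).mem_nhds
        (ne_zero_of_mem_unit_sphere (R t x)))).differentiableAt one_ne_zero).hasFDerivAt
    have hexp : HasDerivAt (fun t => (R t x : E d)) (A (R t x)) t := by
      simpa using! (hasDerivAt_exp_smul_const' A t).clm_apply (hasDerivAt_const t (x : E d))
    exact hfd.comp_hasDerivAt t hexp
  have hmain := (hasDerivAt_integral_of_dominated_loc_of_deriv_le (μ := sphMeasure d)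
    (F := fun t (x : Sph d) => f (R t x)) (F' := fun t (x : Sph d) => fderiv ℝ f (R t x) (A (R t x)))
    (x₀ := 0) (s := Set.univ) (bound := fun _ => C) Filter.univ_mem
    (.of_forall fun t => (hfc.comp (R t).continuous).aestronglyMeasurable)
    ((hfc.comp (R 0).continuous).integrable_of_hasCompactSupport (.of_compactSpace _))
    (hdf.comp (R 0).continuous).aestronglyMeasurable
    (.of_forall fun x t _ => hC (R t x) trivial) (integrable_const C)
    (.of_forall fun x t _ => hderiv x t)).2
  have hconst : (fun t => ∫ x : Sph d, f (R t x) ∂(sphMeasure d)) =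
      fun _ => ∫ x : Sph d, f x ∂(sphMeasure d) := by
    funext t
    exact ((R t).measurePreserving_hausdorffMeasure _).integral_comp
      (R t).toHomeomorph.measurableEmbedding (fun x : Sph d => f x)
  rw [hconst] at hmain
  simpa [hR0] using hmain.unique (hasDerivAt_const _ _)

/-- The infinitesimal rotation in the plane spanned by `u` and `w`. -/
def planeRotation {d : ℕ} (u w : E d) : E d →L[ℝ] E d :=
  (innerSL ℝ u).smulRight w - (innerSL ℝ w).smulRight u

lemma planeRotation_apply {d : ℕ} (u w x : E d) :
    planeRotation u w x = ⟪u, x⟫ • w - ⟪w, x⟫ • u := rfl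

lemma planeRotation_mem_skewAdjoint {d : ℕ} (u w : E d) :
    planeRotation u w ∈ skewAdjoint (E d →L[ℝ] E d) := by
  rw [skewAdjoint.mem_iff, ContinuousLinearMap.star_eq_adjoint, eq_comm,
    ContinuousLinearMap.eq_adjoint_iff]
  intro x y
  simp only [neg_apply, planeRotation_apply, inner_neg_left, inner_sub_left,
    inner_sub_right, real_inner_smul_left, real_inner_smul_right, real_inner_comm x]
  ring

lemma homogExt_coe {d : ℕ} (F : Sph d → ℝ) (x : Sph d) : homogExt F (x : E d) = F x := by
  have hx : (x : E d) ≠ 0 := ne_zero_of_mem_unit_sphere x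
  rw [homogExt, dif_neg hx]
  congr 1
  ext1
  simp

/-- Villani's integration-by-parts identity on the sphere: the gradient in
`σ` of `σ ↦ b(σ'·σ)` integrated against `G` can be rewritten using the maps `M_{σ',σ}`. -/
theorem villani_integration_by_parts
    (d : ℕ) (hd : 2 ≤ d) (b : ℝ → ℝ) (hb : ContDiff ℝ 1 b)
    (σ : Sph d) (G : Sph d → ℝ) (hG : SphSmooth G) :
    (∫ (σ' : Sph d), (G σ' * deriv b ⟪(σ' : E d), (σ : E d)⟫) •
        ((σ' : E d) - ⟪(σ' : E d), (σ : E d)⟫ • (σ : E d)) ∂(sphMeasure d))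
    = ∫ (σ' : Sph d),
        b ⟪(σ' : E d), (σ : E d)⟫ • Mmap (σ' : E d) (σ : E d) (sphGrad G σ')
      ∂(sphMeasure d) := by
  have := isFiniteMeasure_sphMeasure hd
  have hG1 : ContDiffOn ℝ 1 (homogExt G) {x | x ≠ 0} := hG.of_le (by exact_mod_cast le_top)
  have hGd (x : Sph d) : HasFDerivAt (homogExt G) (fderiv ℝ (homogExt G) x) (x : E d) :=
    ((hG1.contDiffAt ((isOpen_setOf_ne_zero d).mem_nhds
      (ne_zero_of_mem_unit_sphere x))).differentiableAt one_ne_zero).hasFDerivAt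
  have hGc : Continuous G := by
    simpa only [homogExt_coe] using continuous_sph_comp hG1.continuousOn
  have hgrad : Continuous (sphGrad G) :=
    (InnerProductSpace.toDual ℝ (E d)).symm.continuous.comp (continuous_sph_comp
      (hG1.continuousOn_fderiv_of_isOpen (isOpen_setOf_ne_zero d) le_rfl))
  have hgrad_inner (x : Sph d) (v : E d) : fderiv ℝ (homogExt G) x v = ⟪sphGrad G x, v⟫ := by
    simp [sphGrad, gradient]
  have hb' : Continuous (deriv b) := hb.continuous_deriv le_rfl
  have hbc : Continuous b := hb.continuous
  have hL : Integrable (fun x : Sph d => (G x * deriv b ⟪(x : E d), (σ : E d)⟫) •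
      ((x : E d) - ⟪(x : E d), (σ : E d)⟫ • (σ : E d))) (sphMeasure d) :=
    Continuous.integrable_of_hasCompactSupport (by fun_prop) (.of_compactSpace _)
  have hR : Integrable (fun x : Sph d =>
      b ⟪(x : E d), (σ : E d)⟫ • Mmap (x : E d) (σ : E d) (sphGrad G x)) (sphMeasure d) :=
    Continuous.integrable_of_hasCompactSupport (by unfold Mmap; fun_prop) (.of_compactSpace _)
  rw [← sub_eq_zero, ← integral_sub hL hR]
  refine ext_inner_left ℝ fun w => ?_
  refine (integral_inner (hL.sub hR) w).symm.trans ?_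
  rw [inner_zero_right]
  have hf : ContDiffOn ℝ 1 (fun y : E d => homogExt G y * b ⟪y, (σ : E d)⟫) {x | x ≠ 0} :=
    hG1.mul (hb.comp (contDiff_id.inner ℝ contDiff_const)).contDiffOn
  rw [← integral_fderiv_skewAdjoint_eq_zero hd hf (planeRotation_mem_skewAdjoint w σ)]
  congr 1
  funext x
  rw [Pi.sub_apply]
  have hin : HasFDerivAt (fun y : E d => ⟪y, (σ : E d)⟫) (innerSL ℝ (σ : E d)) (x : E d) := by
    simp_rw [real_inner_comm (σ : E d)]
    exact (innerSL ℝ (σ : E d)).hasFDerivAt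
  have hbd := ((hb.differentiable one_ne_zero) ⟪(x : E d), (σ : E d)⟫).hasDerivAt.comp_hasFDerivAt
    (x : E d) hin
  have hprod : fderiv ℝ (fun y : E d => homogExt G y * b ⟪y, (σ : E d)⟫) x = _ :=
    ((hGd x).mul hbd).fderiv
  have hσ : ⟪(σ : E d), (σ : E d)⟫ = 1 := by simp
  rw [hprod]
  simp only [planeRotation_apply, Mmap, homogExt_coe, hgrad_inner, add_apply,
    smul_apply, smul_eq_mul, innerSL_apply_apply, inner_sub_right,
    real_inner_smul_right, hσ, Function.comp_apply, real_inner_comm (σ : E d) (x : E d),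
    real_inner_comm w, real_inner_comm (σ : E d) (sphGrad G x)]
  ring
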